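/- Let n, m₁, m₂ ≥ 1, let Λ ⊂ ℝⁿ be a compact set, let r > 0, let g_{1,1}, …, g_{1,m₁} and g_{2,1}, …, g_{2,m₂} be polynomial functions ℝⁿ → ℝ, set W := {z ∈ Λ : g_{2,j}(z) ≤ 0 for all 1 ≤ j ≤ m₂}, assume W is nonempty, and define V(x) := inf_{w ∈ W} min_{1 ≤ i ≤ m₁} g_{1,i}(x − w). Then for every ε > 0 there exists a polynomial function H : ℝⁿ → ℝ such that sup_{x∈Λ} |V(x) − H(x)| < ε and H(x) < g_{1,i}(x − w) for every x with ‖x‖₂ < r, every w ∈ W, and every 1 ≤ i ≤ m₁. -/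

import Mathlib

/-- A function `ℝⁿ → ℝ` is a polynomial function if it is the evaluation map of some
multivariate polynomial `P ∈ ℝ[x₁,…,xₙ]`. -/
def IsPolynomialFun {n : ℕ} (p : EuclideanSpace ℝ (Fin n) → ℝ) : Prop :=
  ∃ P : MvPolynomial (Fin n) ℝ, ∀ x, p x = MvPolynomial.eval (fun i => x i) P

/-!
An infimum of a jointly continuous function over a compact parameter set depends continuously on the
remaining variable, so `V` is continuous. By the Stone–Weierstrass theorem, `V - ε / 4` is within
`ε / 4` of a polynomial function `H` on a compact set containing both `Λ` and the ball. There
`V - ε / 2 < H < V`, and `V x ≤ g₁ᵢ (x - w)` for all `w ∈ W`.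
-/

section Topology

variable {X Y α : Type*} [TopologicalSpace X] [TopologicalSpace Y] [TopologicalSpace α]

theorem isCompact_setOf_mem_and_forall_le [Preorder α] [OrderClosedTopology α] {ι : Type*}
    {K : Set X} (hK : IsCompact K) {f g : ι → X → α} (hf : ∀ i, Continuous (f i))
    (hg : ∀ i, Continuous (g i)) : IsCompact {x ∈ K | ∀ i, f i x ≤ g i x} := by
  have hclosed : IsClosed {x | ∀ i, f i x ≤ g i x} := by
    simp only [Set.ofPred_forall]
    exact isClosed_iInter fun i => isClosed_le (hf i) (hg i)
  exact hK.inter_right hclosed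

theorem continuous_of_forall_isGLB_image [ConditionallyCompleteLinearOrder α] [OrderTopology α]
    [NoTopOrder α] {W : Set Y} (hW : IsCompact W) {f : X → Y → α} (hf : Continuous ↿f)
    {V : X → α} (hV : ∀ x, IsGLB (f x '' W) (V x)) : Continuous V := by
  have hV_eq_sInf : V = fun x => sInf (f x '' W) :=
    funext fun x => ((hV x).csInf_eq (hV x).nonempty).symm
  exact hV_eq_sInf ▸ hW.continuous_sInf hf

theorem isGLB_sInf_image_finset_inf' [ConditionallyCompleteLinearOrder α] [OrderTopology α]
    {ι : Type*} {s : Finset ι} (hs : s.Nonempty) {W : Set Y} (hW : IsCompact W)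
    (hWne : W.Nonempty) {f : ι → Y → α} (hf : ∀ i ∈ s, Continuous (f i)) :
    IsGLB ((fun w => s.inf' hs fun i => f i w) '' W)
      (sInf ((fun w => s.inf' hs fun i => f i w) '' W)) :=
  (hW.image (Continuous.finset_inf'_apply hs hf)).isGLB_sInf (hWne.image _)

end Topology

section StoneWeierstrass

variable {X σ R : Type*} [TopologicalSpace X] [CommSemiring R] [TopologicalSpace R]
  [IsTopologicalSemiring R]

theorem mvPolynomial_aeval_continuousMap_apply (c : σ → C(X, R)) (P : MvPolynomial σ R) (x : X) :
    MvPolynomial.aeval c P x = MvPolynomial.eval (fun i => c i x) P :=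
  MvPolynomial.map_aeval c (ContinuousMap.evalAlgHom R R x).toRingHom P

theorem separatesPoints_range_aeval {c : σ → C(X, R)}
    (hc : Function.Injective fun x i => c i x) :
    (MvPolynomial.aeval (R := R) c).range.SeparatesPoints := by
  intro x y hxy
  obtain ⟨i, hi⟩ := Function.ne_iff.mp (hc.ne hxy)
  exact ⟨c i, ⟨c i, ⟨MvPolynomial.X i, MvPolynomial.aeval_X c i⟩, rfl⟩, hi⟩

theorem exists_mvPolynomial_eval_near {c : σ → C(X, ℝ)}
    (hc : Function.Injective fun x i => c i x) (f : C(X, ℝ)) {K : Set X} (hK : IsCompact K)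
    {ε : ℝ} (hε : 0 < ε) :
    ∃ P : MvPolynomial σ ℝ, ∀ x ∈ K, |MvPolynomial.eval (fun i => c i x) P - f x| < ε := by
  obtain ⟨_, ⟨P, rfl⟩, hP⟩ :=
    ContinuousMap.exists_mem_subalgebra_near_continuous_of_isCompact_of_separatesPoints
      (separatesPoints_range_aeval hc) f hK hε
  exact ⟨P, fun x hx => by
    simpa [mvPolynomial_aeval_continuousMap_apply] using hP x hx⟩

end StoneWeierstrass

section PolynomialFun

variable {n : ℕ}

theorem IsPolynomialFun.continuous {p : EuclideanSpace ℝ (Fin n) → ℝ} (hp : IsPolynomialFun p) :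
    Continuous p := by
  obtain ⟨P, hP⟩ := hp
  rw [funext hP]
  exact P.continuous_eval.comp (by fun_prop)

theorem exists_isPolynomialFun_near {f : EuclideanSpace ℝ (Fin n) → ℝ} (hf : Continuous f)
    {K : Set (EuclideanSpace ℝ (Fin n))} (hK : IsCompact K) {ε : ℝ} (hε : 0 < ε) :
    ∃ H, IsPolynomialFun H ∧ ∀ x ∈ K, |H x - f x| < ε := by
  let coord (i : Fin n) : C(EuclideanSpace ℝ (Fin n), ℝ) := ⟨fun x => x i, by fun_prop⟩
  have hcoord : Function.Injective fun x i => coord i x := fun x y hxy => PiLp.ext (congrFun hxy)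
  obtain ⟨P, hP⟩ := exists_mvPolynomial_eval_near hcoord ⟨f, hf⟩ hK hε
  exact ⟨_, ⟨P, fun _ => rfl⟩, hP⟩

theorem exists_isPolynomialFun_mem_Ioo {f : EuclideanSpace ℝ (Fin n) → ℝ} (hf : Continuous f)
    {K : Set (EuclideanSpace ℝ (Fin n))} (hK : IsCompact K) {ε : ℝ} (hε : 0 < ε) :
    ∃ H, IsPolynomialFun H ∧ ∀ x ∈ K, H x ∈ Set.Ioo (f x - ε) (f x) := by
  obtain ⟨H, hH, hnear⟩ :=
    exists_isPolynomialFun_near (hf.sub (continuous_const (y := ε / 2))) hK (half_pos hε)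
  refine ⟨H, hH, fun x hx => ?_⟩
  have hHx := abs_lt.mp (hnear x hx)
  simp only [Pi.sub_apply] at hHx
  constructor <;> linarith

theorem statement_9_general {ι Y : Type*} [Fintype ι] [Nonempty ι] [TopologicalSpace Y]
    {Λ B : Set (EuclideanSpace ℝ (Fin n))} (hΛ : Bornology.IsBounded Λ)
    (hB : Bornology.IsBounded B) {W : Set Y} (hW : IsCompact W)
    {g : ι → EuclideanSpace ℝ (Fin n) → Y → ℝ} (hg : ∀ i, Continuous ↿(g i))
    {V : EuclideanSpace ℝ (Fin n) → ℝ}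
    (hV : ∀ x, IsGLB ((fun w => Finset.univ.inf' Finset.univ_nonempty fun i => g i x w) '' W)
      (V x))
    {ε : ℝ} (hε : 0 < ε) :
    ∃ H, IsPolynomialFun H ∧ (⨆ x ∈ Λ, |V x - H x|) < ε ∧
      ∀ x ∈ B, ∀ w ∈ W, ∀ i, H x < g i x w := by
  have hVcont : Continuous V :=
    continuous_of_forall_isGLB_image hW
      (Continuous.finset_inf'_apply Finset.univ_nonempty fun i _ => hg i) hV
  have hVle (x) (w) (hw : w ∈ W) (i) : V x ≤ g i x w :=
    ((hV x).1 (Set.mem_image_of_mem _ hw)).trans (Finset.inf'_le _ (Finset.mem_univ i))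
  obtain ⟨H, hH, hHV⟩ := exists_isPolynomialFun_mem_Ioo hVcont
    (hΛ.union hB).isCompact_closure (half_pos hε)
  have hHV_union (x) (hx : x ∈ Λ ∪ B) : H x ∈ Set.Ioo (V x - ε / 2) (V x) :=
    hHV x (subset_closure hx)
  refine ⟨H, hH, lt_of_le_of_lt ?_ (half_lt_self hε), fun x hx w hw i =>
    (hHV_union x (.inr hx)).2.trans_le (hVle x w hw i)⟩
  refine Real.iSup_le (fun x => Real.iSup_le (fun hx => ?_) (half_pos hε).le) (half_pos hε).le
  obtain ⟨hlower, hupper⟩ := hHV_union x (.inl hx)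
  rw [abs_of_pos (sub_pos.mpr hupper)]
  linarith

end PolynomialFun

/-- The function `V x = inf_{w ∈ W} min_i g₁ᵢ (x - w)`, with
`W = {z ∈ Λ | ∀ j, g₂ⱼ z ≤ 0}` nonempty and `Λ` compact, can be approximated uniformly on
`Λ` by a polynomial function `H` satisfying `H x < g₁ᵢ (x - w)` for all `x ∈ B_r(0)`,
`w ∈ W` and all `i`. -/
theorem statement_9 (n m₁ m₂ : ℕ) (hn : 1 ≤ n) (hm₁ : 1 ≤ m₁) (hm₂ : 1 ≤ m₂)
    (Λ : Set (EuclideanSpace ℝ (Fin n))) (hΛ : IsCompact Λ)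
    (r : ℝ) (hr : 0 < r)
    (g₁ : Fin m₁ → EuclideanSpace ℝ (Fin n) → ℝ)
    (g₂ : Fin m₂ → EuclideanSpace ℝ (Fin n) → ℝ)
    (hg₁ : ∀ i, IsPolynomialFun (g₁ i)) (hg₂ : ∀ j, IsPolynomialFun (g₂ j))
    (W : Set (EuclideanSpace ℝ (Fin n)))
    (hW : W = {z ∈ Λ | ∀ j : Fin m₂, g₂ j z ≤ 0}) (hWne : W.Nonempty)
    (V : EuclideanSpace ℝ (Fin n) → ℝ)
    (hV : ∀ x, V x = sInf ((fun w => Finset.univ.inf'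
      (Finset.univ_nonempty_iff.mpr ⟨⟨0, hm₁⟩⟩) (fun i => g₁ i (x - w))) '' W))
    (ε : ℝ) (hε : 0 < ε) :
    ∃ H : EuclideanSpace ℝ (Fin n) → ℝ, IsPolynomialFun H ∧
      (⨆ x ∈ Λ, |V x - H x|) < ε ∧
      ∀ x, ‖x‖ < r → ∀ w ∈ W, ∀ i : Fin m₁, H x < g₁ i (x - w) := by
  have hWcompact : IsCompact W :=
    hW ▸ isCompact_setOf_mem_and_forall_le hΛ (fun j => (hg₂ j).continuous)
      fun _ => continuous_const
  have : Nonempty (Fin m₁) := ⟨⟨0, hm₁⟩⟩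
  have hg₁_sub (i : Fin m₁) : Continuous ↿fun x w => g₁ i (x - w) :=
    (hg₁ i).continuous.comp continuous_sub
  have hVglb (x) : IsGLB ((fun w => Finset.univ.inf' Finset.univ_nonempty
      fun i => g₁ i (x - w)) '' W) (V x) :=
    hV x ▸ isGLB_sInf_image_finset_inf' _ hWcompact hWne
      fun i _ => (hg₁_sub i).comp (.prodMk_right x)
  simpa only [mem_ball_zero_iff] using statement_9_general hΛ.isBounded
    (Metric.isBounded_ball (x := 0) (r := r)) hWcompact hg₁_sub hVglb hε
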